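/- There exist constants C > 0 and C₁ > 0, depending only on Ω, ω₀, ω and η⁰, such that for every T > 0, every bounded measurable potential a, every λ ≥ 1, every s ≥ C (e^{2λM} T + T² + T²‖a‖_∞^{1/2}), and every classical nonnegative solution q of the adjoint heat equation with Dirichlet boundary condition, one has λ ∫₀^T ∫_Ω e^{−sα(t,x)} s ξ(t,x)² η⁰(x) q(t,x) dx dt + ∫₀^T ∫_Ω e^{−sα(t,x)} ξ(t,x) q(t,x) dx dt ≤ C₁ λ ∫₀^T ∫_ω e^{−sα(t,x)} s ξ(t,x)² q(t,x) dx dt. -/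

import Mathlib

open MeasureTheory Real Set RealInnerProductSpace

noncomputable def spaceLaplacian {N : ℕ} (f : EuclideanSpace ℝ (Fin N) → ℝ)
    (x : EuclideanSpace ℝ (Fin N)) : ℝ :=
  ∑ i : Fin N, fderiv ℝ (fun y => fderiv ℝ f y (EuclideanSpace.single i 1)) x
    (EuclideanSpace.single i 1)

lemma aux_integrable {N : ℕ} {Ω : Set (EuclideanSpace ℝ (Fin N))}
    (hΩb : Bornology.IsBounded Ω)
    {f : EuclideanSpace ℝ (Fin N) → ℝ} (hf : ContinuousOn f (closure Ω)) :
    IntegrableOn f Ω :=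
  (hf.integrableOn_compact hΩb.isCompact_closure).mono_set subset_closure

lemma aux_green_dir {N : ℕ} {Ω : Set (EuclideanSpace ℝ (Fin N))}
    (hΩo : IsOpen Ω) (hΩb : Bornology.IsBounded Ω)
    {u v : EuclideanSpace ℝ (Fin N) → ℝ} (e : EuclideanSpace ℝ (Fin N))
    (hu1 : ∀ x ∈ closure Ω, DifferentiableAt ℝ u x)
    (hu2 : ∀ x ∈ closure Ω, DifferentiableAt ℝ (fun y => fderiv ℝ u y) x)
    (hu3 : ContinuousOn (fun x => fderiv ℝ (fun y => fderiv ℝ u y) x) (closure Ω))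
    (hu0 : ∀ x ∈ frontier Ω, u x = 0)
    (hv1 : ∀ x ∈ closure Ω, DifferentiableAt ℝ v x)
    (hv2 : ∀ x ∈ closure Ω, DifferentiableAt ℝ (fun y => fderiv ℝ v y) x)
    (hv3 : ContinuousOn (fun x => fderiv ℝ (fun y => fderiv ℝ v y) x) (closure Ω))
    (hv0 : ∀ x ∈ frontier Ω, v x = 0) :
    ∫ x in Ω, (u x * fderiv ℝ (fun y => fderiv ℝ v y) x e e
      - v x * fderiv ℝ (fun y => fderiv ℝ u y) x e e) = 0 := by
  set X : EuclideanSpace ℝ (Fin N) → ℝ := fun x => u x * fderiv ℝ v x e - v x * fderiv ℝ u x e with hX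
  set Y : EuclideanSpace ℝ (Fin N) → ℝ := fun x => u x * fderiv ℝ (fun y => fderiv ℝ v y) x e e
      - v x * fderiv ℝ (fun y => fderiv ℝ u y) x e e with hY
  have huc : ContinuousOn u (closure Ω) := fun x hx => (hu1 x hx).continuousAt.continuousWithinAt
  have hvc : ContinuousOn v (closure Ω) := fun x hx => (hv1 x hx).continuousAt.continuousWithinAt
  have hu1c : ContinuousOn (fun y => fderiv ℝ u y) (closure Ω) :=
    fun x hx => (hu2 x hx).continuousAt.continuousWithinAt
  have hv1c : ContinuousOn (fun y => fderiv ℝ v y) (closure Ω) :=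
    fun x hx => (hv2 x hx).continuousAt.continuousWithinAt
  have hXc : ContinuousOn X (closure Ω) :=
    (huc.mul (hv1c.clm_apply continuousOn_const)).sub (hvc.mul (hu1c.clm_apply continuousOn_const))
  have hYc : ContinuousOn Y (closure Ω) :=
    (huc.mul ((hv3.clm_apply continuousOn_const).clm_apply continuousOn_const)).sub
      (hvc.mul ((hu3.clm_apply continuousOn_const).clm_apply continuousOn_const))
  have hXd : ∀ x ∈ closure Ω, HasLineDerivAt ℝ X (Y x) x e := by
    intro x hx
    have h1 := (hu1 x hx).hasFDerivAt.hasLineDerivAt e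
    have h2 := (hv1 x hx).hasFDerivAt.hasLineDerivAt e
    have h3 := (hu2 x hx).hasFDerivAt.hasLineDerivAt e
    have h4 := (hv2 x hx).hasFDerivAt.hasLineDerivAt e
    unfold HasLineDerivAt at *
    have h3' := h3.clm_apply (hasDerivAt_const (0:ℝ) e)
    have h4' := h4.clm_apply (hasDerivAt_const (0:ℝ) e)
    have := (h1.mul h4').sub (h2.mul h3')
    refine this.congr_deriv ?_
    simp [hY]
    ring
  have hfr : ∀ x ∉ Ω, x ∈ closure Ω → x ∈ frontier Ω := by
    intro x h1 h2
    rw [hΩo.frontier_eq]; exact ⟨h2, h1⟩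
  have hD : ∀ x, HasLineDerivAt ℝ (Ω.indicator X) (Ω.indicator Y x) x e := by
    intro x
    by_cases hx : x ∈ Ω
    · rw [indicator_of_mem hx]
      have h := hXd x (subset_closure hx)
      refine h.congr_of_eventuallyEq ?_
      filter_upwards [hΩo.mem_nhds hx] with y hy
      rw [indicator_of_mem hy]
    · rw [indicator_of_notMem hx]
      by_cases hx' : x ∈ closure Ω
      · have hxf := hfr x hx hx'
        have h := hXd x hx'
        have hX0 : X x = 0 := by simp [hX, hu0 x hxf, hv0 x hxf]
        have hY0 : Y x = 0 := by simp [hY, hu0 x hxf, hv0 x hxf]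
        rw [hY0] at h
        unfold HasLineDerivAt at *
        rw [hasDerivAt_iff_isLittleO] at *
        refine Asymptotics.IsBigO.trans_isLittleO (Asymptotics.isBigO_of_le _ ?_) h
        intro t
        simp only [zero_smul, add_zero, hX0, indicator_of_notMem hx, smul_zero, sub_zero]
        exact norm_indicator_le_norm_self _ _
      · have h : HasLineDerivAt ℝ (fun _ : EuclideanSpace ℝ (Fin N) => (0:ℝ)) 0 x e := by
          unfold HasLineDerivAt
          exact hasDerivAt_const _ _
        refine h.congr_of_eventuallyEq ?_
        filter_upwards [isClosed_closure.isOpen_compl.mem_nhds hx'] with y hy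
        exact indicator_of_notMem (fun h => hy (subset_closure h)) _
  have hXi : Integrable (Ω.indicator X) :=
    (integrable_indicator_iff hΩo.measurableSet).2 (aux_integrable hΩb hXc)
  have hYi : Integrable (Ω.indicator Y) :=
    (integrable_indicator_iff hΩo.measurableSet).2 (aux_integrable hΩb hYc)
  have key := integral_bilinear_hasLineDerivAt_right_eq_neg_left_of_integrable
    (μ := (volume : Measure (EuclideanSpace ℝ (Fin N))))
    (f := Ω.indicator X) (f' := Ω.indicator Y) (g := fun _ => (1:ℝ)) (g' := fun _ => (0:ℝ))
    (v := e) (B := ContinuousLinearMap.mul ℝ ℝ) (by simpa using hYi) (by simp) (by simpa using hXi)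
    (fun x _ => hD x) (fun x _ => by unfold HasLineDerivAt; exact hasDerivAt_const _ _)
  simp only [ContinuousLinearMap.mul_apply', mul_zero, integral_zero, mul_one] at key
  rw [integral_indicator hΩo.measurableSet] at key
  linarith

lemma aux_lap {N : ℕ} {u : EuclideanSpace ℝ (Fin N) → ℝ} {x : EuclideanSpace ℝ (Fin N)}
    (h : DifferentiableAt ℝ (fun y => fderiv ℝ u y) x) :
    spaceLaplacian u x = ∑ i : Fin N, fderiv ℝ (fun y => fderiv ℝ u y) x
      (EuclideanSpace.single i 1) (EuclideanSpace.single i 1) := by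
  unfold spaceLaplacian
  refine Finset.sum_congr rfl fun i _ => ?_
  have := (h.hasFDerivAt.clm_apply (hasFDerivAt_const (EuclideanSpace.single i (1:ℝ)) x)).fderiv
  rw [this]
  simp

lemma aux_lap_cont {N : ℕ} {Ω : Set (EuclideanSpace ℝ (Fin N))}
    {u : EuclideanSpace ℝ (Fin N) → ℝ}
    (hu2 : ∀ x ∈ closure Ω, DifferentiableAt ℝ (fun y => fderiv ℝ u y) x)
    (hu3 : ContinuousOn (fun x => fderiv ℝ (fun y => fderiv ℝ u y) x) (closure Ω)) :
    ContinuousOn (fun x => spaceLaplacian u x) (closure Ω) := by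
  refine ContinuousOn.congr (f := fun x => ∑ i : Fin N, fderiv ℝ (fun y => fderiv ℝ u y) x
      (EuclideanSpace.single i 1) (EuclideanSpace.single i 1)) ?_ (fun x hx => aux_lap (hu2 x hx))
  exact continuousOn_finsetSum _ fun i _ =>
    (hu3.clm_apply continuousOn_const).clm_apply continuousOn_const

lemma aux_green {N : ℕ} {Ω : Set (EuclideanSpace ℝ (Fin N))}
    (hΩo : IsOpen Ω) (hΩb : Bornology.IsBounded Ω)
    {u v : EuclideanSpace ℝ (Fin N) → ℝ}
    (hu1 : ∀ x ∈ closure Ω, DifferentiableAt ℝ u x)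
    (hu2 : ∀ x ∈ closure Ω, DifferentiableAt ℝ (fun y => fderiv ℝ u y) x)
    (hu3 : ContinuousOn (fun x => fderiv ℝ (fun y => fderiv ℝ u y) x) (closure Ω))
    (hu0 : ∀ x ∈ frontier Ω, u x = 0)
    (hv1 : ∀ x ∈ closure Ω, DifferentiableAt ℝ v x)
    (hv2 : ∀ x ∈ closure Ω, DifferentiableAt ℝ (fun y => fderiv ℝ v y) x)
    (hv3 : ContinuousOn (fun x => fderiv ℝ (fun y => fderiv ℝ v y) x) (closure Ω))
    (hv0 : ∀ x ∈ frontier Ω, v x = 0) :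
    ∫ x in Ω, (u x * spaceLaplacian v x - v x * spaceLaplacian u x) = 0 := by
  have huc : ContinuousOn u (closure Ω) := fun x hx => (hu1 x hx).continuousAt.continuousWithinAt
  have hvc : ContinuousOn v (closure Ω) := fun x hx => (hv1 x hx).continuousAt.continuousWithinAt
  have : ∀ x ∈ Ω, u x * spaceLaplacian v x - v x * spaceLaplacian u x =
      ∑ i : Fin N, (u x * fderiv ℝ (fun y => fderiv ℝ v y) x
        (EuclideanSpace.single i 1) (EuclideanSpace.single i 1)
      - v x * fderiv ℝ (fun y => fderiv ℝ u y) x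
        (EuclideanSpace.single i 1) (EuclideanSpace.single i 1)) := by
    intro x hx
    rw [aux_lap (hu2 x (subset_closure hx)), aux_lap (hv2 x (subset_closure hx)),
      Finset.mul_sum, Finset.mul_sum, Finset.sum_sub_distrib]
  rw [setIntegral_congr_fun hΩo.measurableSet this, integral_finsetSum]
  · exact Finset.sum_eq_zero fun i _ =>
      aux_green_dir hΩo hΩb _ hu1 hu2 hu3 hu0 hv1 hv2 hv3 hv0
  · intro i _
    exact aux_integrable hΩb ((huc.mul ((hv3.clm_apply continuousOn_const).clm_apply continuousOn_const)).sub
      (hvc.mul ((hu3.clm_apply continuousOn_const).clm_apply continuousOn_const)))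

/-- Differentiation under the integral sign. -/
lemma aux_deriv_int {N : ℕ} {Ω : Set (EuclideanSpace ℝ (Fin N))}
    (hΩo : IsOpen Ω) (hΩb : Bornology.IsBounded Ω) {T : ℝ}
    {Q Q' : ℝ × EuclideanSpace ℝ (Fin N) → ℝ}
    (hQ : ContinuousOn Q (Ioo 0 T ×ˢ closure Ω)) (hQ' : ContinuousOn Q' (Ioo 0 T ×ˢ closure Ω))
    (hd : ∀ p ∈ Ioo 0 T ×ˢ closure Ω, HasDerivAt (fun τ => Q (τ, p.2)) (Q' p) p.1)
    {t : ℝ} (ht : t ∈ Ioo 0 T) :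
    HasDerivAt (fun τ => ∫ x in Ω, Q (τ, x)) (∫ x in Ω, Q' (t, x)) t := by
  have slice : ∀ {F : ℝ × EuclideanSpace ℝ (Fin N) → ℝ}, ContinuousOn F (Ioo 0 T ×ˢ closure Ω) →
      ∀ τ ∈ Ioo 0 T, ContinuousOn (fun x => F (τ, x)) (closure Ω) := by
    intro F hF τ hτ
    exact hF.comp (by fun_prop) (fun x hx => ⟨hτ, hx⟩)
  obtain ⟨ε, hε, hball⟩ := Metric.nhds_basis_closedBall.mem_iff.1 (isOpen_Ioo.mem_nhds ht)
  have hK : IsCompact (Metric.closedBall t ε ×ˢ closure Ω) :=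
    (isCompact_closedBall t ε).prod hΩb.isCompact_closure
  obtain ⟨B, hB⟩ := hK.exists_bound_of_continuousOn
    (hQ'.mono (prod_mono hball subset_rfl))
  refine (hasDerivAt_integral_of_dominated_loc_of_deriv_le (𝕜 := ℝ)
    (μ := volume.restrict Ω) (F := fun τ x => Q (τ, x)) (F' := fun τ x => Q' (τ, x))
    (x₀ := t) (bound := fun _ => B) (Metric.closedBall_mem_nhds t hε) ?_ ?_ ?_ ?_ ?_ ?_).2
  · filter_upwards [isOpen_Ioo.mem_nhds ht] with τ hτ
    exact (aux_integrable hΩb (slice hQ τ hτ)).aestronglyMeasurable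
  · exact aux_integrable hΩb (slice hQ t ht)
  · exact (aux_integrable hΩb (slice hQ' t ht)).aestronglyMeasurable
  · filter_upwards [ae_restrict_mem hΩo.measurableSet] with x hx τ hτ
    exact hB (τ, x) ⟨hτ, subset_closure hx⟩
  · exact aux_integrable hΩb continuousOn_const
  · filter_upwards [ae_restrict_mem hΩo.measurableSet] with x hx τ hτ
    exact hd (τ, x) ⟨hball hτ, subset_closure hx⟩

lemma aux_int_prod {N : ℕ} {Ω : Set (EuclideanSpace ℝ (Fin N))}
    (hΩo : IsOpen Ω) (hΩb : Bornology.IsBounded Ω) {T : ℝ}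
    {Q : ℝ × EuclideanSpace ℝ (Fin N) → ℝ}
    (hQ : ContinuousOn Q (Ioo 0 T ×ˢ Ω)) {B : ℝ}
    (hB : ∀ p ∈ Ioo 0 T ×ˢ Ω, |Q p| ≤ B) :
    IntegrableOn (fun t => ∫ x in Ω, Q (t, x)) (Ioo 0 T) := by
  have h : IntegrableOn Q (Ioo 0 T ×ˢ Ω) := by
    have hfin : volume (Ioo 0 T ×ˢ Ω) < ⊤ :=
      ((Metric.isBounded_Ioo 0 T).prod hΩb).measure_lt_top
    refine IntegrableOn.of_bound hfin (hQ.aestronglyMeasurable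
      (isOpen_Ioo.prod hΩo).measurableSet) B ?_
    filter_upwards [ae_restrict_mem (isOpen_Ioo.prod hΩo).measurableSet] with p hp
    exact hB p hp
  rw [IntegrableOn, Measure.volume_eq_prod, ← Measure.prod_restrict] at h
  exact h.integral_prod_left

lemma aux_ae_le {N : ℕ} {U : Set (ℝ × EuclideanSpace ℝ (Fin N))} (hU : IsOpen U)
    {f g : ℝ × EuclideanSpace ℝ (Fin N) → ℝ} (hf : ContinuousOn f U) (hg : ContinuousOn g U)
    (h : ∀ᵐ p ∂(volume.restrict U), f p ≤ g p) : ∀ p ∈ U, f p ≤ g p := by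
  intro p hp
  have h1 : (fun p => max (f p) (g p)) =ᵐ[volume.restrict U] g := by
    filter_upwards [h] with p hp using max_eq_right hp
  have h2 := Measure.eqOn_open_of_ae_eq h1 hU (hf.sup hg) hg hp
  exact max_eq_right_iff.1 h2

lemma aux_lap_comp {N : ℕ} {P P' P'' : ℝ → ℝ} {η : EuclideanSpace ℝ (Fin N) → ℝ}
    (hP : ∀ y, HasDerivAt P (P' y) y) (hP' : ∀ y, HasDerivAt P' (P'' y) y)
    (hη : ContDiff ℝ 2 η) (x : EuclideanSpace ℝ (Fin N)) :
    spaceLaplacian (fun z => P (η z)) x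
      = P'' (η x) * ‖gradient η x‖ ^ 2 + P' (η x) * spaceLaplacian η x := by
  have hd : Differentiable ℝ η := hη.differentiable (by norm_num)
  have hd2 : Differentiable ℝ (fderiv ℝ η) :=
    (hη.fderiv_right (m := 1) (by norm_num)).differentiable (by norm_num)
  have h1 : ∀ y, fderiv ℝ (fun z => P (η z)) y = P' (η y) • fderiv ℝ η y := fun y =>
    ((hP (η y)).comp_hasFDerivAt y (hd y).hasFDerivAt).fderiv
  have hg : ‖gradient η x‖ ^ 2 = ∑ i : Fin N, (fderiv ℝ η x (EuclideanSpace.single i 1)) ^ 2 := by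
    rw [EuclideanSpace.norm_sq_eq]
    refine Finset.sum_congr rfl fun i _ => ?_
    have : fderiv ℝ η x (EuclideanSpace.single i 1) = inner ℝ (gradient η x) (EuclideanSpace.single i 1) := by
      rw [gradient, InnerProductSpace.toDual_symm_apply]
    rw [this, EuclideanSpace.inner_single_right]
    simp
  rw [hg]
  unfold spaceLaplacian
  rw [Finset.mul_sum, Finset.mul_sum, ← Finset.sum_add_distrib]
  refine Finset.sum_congr rfl fun i _ => ?_
  simp only [h1]
  have h2 : HasFDerivAt (fun y => P' (η y)) (P'' (η x) • fderiv ℝ η x) x :=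
    (hP' (η x)).comp_hasFDerivAt x (hd x).hasFDerivAt
  have h3 : DifferentiableAt ℝ (fun y => fderiv ℝ η y (EuclideanSpace.single i 1)) x :=
    (hd2 x).clm_apply (differentiableAt_const _)
  have h4 := (h2.mul h3.hasFDerivAt).fderiv
  have h5 : (fun y => (P' (η y) • fderiv ℝ η y) (EuclideanSpace.single i 1))
    = (fun y => P' (η y)) * (fun y => fderiv ℝ η y (EuclideanSpace.single i 1)) := by
    ext y; simp
  rw [h5, h4]
  simp
  ring

lemma aux_P1 (s r lam E y : ℝ) :
    HasDerivAt (fun y => Real.exp (-s * ((E - Real.exp (lam * y)) / r)) * y)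
      (Real.exp (-s * ((E - Real.exp (lam * y)) / r)) * (s / r * lam * Real.exp (lam * y) * y + 1)) y := by
  have h1 : HasDerivAt (fun y => Real.exp (lam * y)) (Real.exp (lam * y) * (lam * 1)) y :=
    ((hasDerivAt_id y).const_mul lam).exp
  have h2 := ((((h1.const_sub E).div_const r).const_mul (-s)).exp).mul (hasDerivAt_id y)
  refine h2.congr_deriv ?_
  simp only [id]
  ring

lemma aux_P2 (s r lam E y : ℝ) :
    HasDerivAt (fun y => Real.exp (-s * ((E - Real.exp (lam * y)) / r)) * (s / r * lam * Real.exp (lam * y) * y + 1))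
      (Real.exp (-s * ((E - Real.exp (lam * y)) / r)) *
        ((s / r * lam * Real.exp (lam * y)) ^ 2 * y + 2 * (s / r * lam * Real.exp (lam * y))
          + lam * (s / r * lam * Real.exp (lam * y)) * y)) y := by
  have h1 : HasDerivAt (fun y => Real.exp (lam * y)) (Real.exp (lam * y) * (lam * 1)) y :=
    ((hasDerivAt_id y).const_mul lam).exp
  have h2 := ((((h1.const_sub E).div_const r).const_mul (-s)).exp).mul
    (((h1.const_mul (s / r * lam)).mul (hasDerivAt_id y)).add_const 1)
  refine h2.congr_deriv ?_
  simp only [id]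
  simp only [Pi.mul_apply, id]
  ring

lemma aux_Pt (s T c y t : ℝ) (ht : t ∈ Ioo 0 T) :
    HasDerivAt (fun t => Real.exp (-s * (c / (t * (T - t)))) * y)
      (Real.exp (-s * (c / (t * (T - t)))) * (y * (s * c * (T - 2 * t) / (t * (T - t)) ^ 2))) t := by
  have hr : t * (T - t) ≠ 0 := (mul_pos ht.1 (sub_pos.2 ht.2)).ne'
  have h0 : HasDerivAt (fun t => t * (T - t)) (1 * (T - t) + t * (-1)) t :=
    (hasDerivAt_id t).mul ((hasDerivAt_id t).const_sub T)
  have h2 := ((((hasDerivAt_const t c).div h0 hr).const_mul (-s)).exp).mul_const y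
  refine h2.congr_deriv ?_
  simp only [Pi.div_apply]
  ring

/-- consequences of the lower bound on `s`. -/
lemma aux_param {C g0 K T E A s lam y t : ℝ} (hg0 : 0 < g0)
    (hC1 : 1 ≤ C) (hC2 : 8 ≤ C * g0) (hC3 : K ≤ C * g0) (hT : 0 < T) (hA : 0 ≤ A)
    (hs : C * (E * T + T ^ 2 + T ^ 2 * Real.sqrt A) ≤ s) (hlam : 1 ≤ lam) (hy : 0 ≤ y)
    (hE : Real.exp (lam * y) ≤ E) (ht : t ∈ Ioo 0 T) :
    0 < s ∧ 1 ≤ s / (t * (T - t)) * lam * Real.exp (lam * y) ∧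
    K ≤ s / (t * (T - t)) * lam * Real.exp (lam * y) * g0 / 4 ∧
    A ≤ (s / (t * (T - t)) * lam * Real.exp (lam * y)) ^ 2 * g0 / 8 ∧
    y * (s * (E - Real.exp (lam * y)) * (T - 2 * t) / (t * (T - t)) ^ 2) ≤
      (s / (t * (T - t)) * lam * Real.exp (lam * y)) ^ 2 * y * g0 / 8 := by
  obtain ⟨ht0, htT⟩ := ht
  have he1 : 1 ≤ Real.exp (lam * y) := Real.one_le_exp (by positivity)
  set e := Real.exp (lam * y)
  have hE1 : 1 ≤ E := he1.trans hE
  have hC0 : 0 < C := by linarith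
  set R := Real.sqrt A with hR
  have hR0 : 0 ≤ R := Real.sqrt_nonneg A
  have hRA : R ^ 2 = A := Real.sq_sqrt hA
  have hr : 0 < t * (T - t) := mul_pos ht0 (sub_pos.2 htT)
  have hrT : 4 * (t * (T - t)) ≤ T ^ 2 := by nlinarith [sq_nonneg (T - 2 * t)]
  set r := t * (T - t) with hrdef
  have n1 : 0 ≤ C * (E * T) := by positivity
  have n2 : 0 ≤ C * T ^ 2 := by positivity
  have n3 : 0 ≤ C * (T ^ 2 * R) := by positivity
  have s1 : C * (E * T) ≤ s := by linarith
  have s2 : C * T ^ 2 ≤ s := by linarith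
  have s3 : C * (T ^ 2 * R) ≤ s := by linarith
  have hs0 : 0 < s := lt_of_lt_of_le (by positivity) s2
  have hk : 4 * C ≤ s / r := by
    rw [le_div_iff₀ hr]; nlinarith
  have hk0 : 0 < s / r := by positivity
  have hXk : s / r ≤ s / r * lam * e := by
    have : 1 ≤ lam * e := by nlinarith
    nlinarith
  have hkR : 4 * C * R ≤ s / r := by
    rw [le_div_iff₀ hr]
    have := mul_le_mul_of_nonneg_left hrT (mul_nonneg hC0.le hR0)
    linarith
  set X := s / r * lam * e
  have hX1 : 4 * C ≤ X := hk.trans hXk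
  refine ⟨hs0, by linarith, by nlinarith, ?_, ?_⟩
  · have h1 : (4 * C * R) ^ 2 ≤ X ^ 2 := by
      apply pow_le_pow_left₀ (by positivity) (hkR.trans hXk)
    have h2 : A * 8 ≤ A * (16 * C * (C * g0)) := by
      apply mul_le_mul_of_nonneg_left _ hA
      nlinarith
    have h3 : A * (16 * C * (C * g0)) = (4 * C * R) ^ 2 * g0 := by rw [← hRA]; ring
    have h4 := mul_le_mul_of_nonneg_right h1 hg0.le
    linarith
  · have h1 : s * (E - e) * (T - 2 * t) / r ^ 2 ≤ s * E * T / r ^ 2 := by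
      apply div_le_div_of_nonneg_right _ (by positivity)
      rw [mul_assoc, mul_assoc]
      apply mul_le_mul_of_nonneg_left _ hs0.le
      have : (E - e) * (T - 2 * t) ≤ (E - e) * T :=
        mul_le_mul_of_nonneg_left (by linarith) (by linarith)
      have h7 : 0 ≤ e * T := by positivity
      linarith
    have h2 : s * E * T / r ^ 2 * C ≤ (s / r) ^ 2 := by
      rw [div_pow, div_mul_eq_mul_div]
      apply div_le_div_of_nonneg_right _ (by positivity)
      have := mul_le_mul_of_nonneg_left s1 hs0.le
      linarith
    have h3 : (s / r) ^ 2 ≤ X ^ 2 := pow_le_pow_left₀ hk0.le hXk 2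
    have h4 : s * E * T / r ^ 2 ≤ X ^ 2 * g0 / 8 := by
      have h5 : 0 ≤ s * E * T / r ^ 2 := by positivity
      have := mul_le_mul_of_nonneg_left hC2 h5
      have h6 : s * E * T / r ^ 2 * C * g0 ≤ X ^ 2 * g0 :=
        mul_le_mul_of_nonneg_right (h2.trans h3) hg0.le
      linarith
    have := mul_le_mul_of_nonneg_left (h1.trans h4) hy
    linarith

lemma aux_num {g0 K M X lam y g D A τ : ℝ} (hg0 : 0 < g0) (hX : 1 ≤ X) (hlam : 1 ≤ lam)
    (hy : 0 ≤ y) (hyM : y ≤ M) (hg : 0 ≤ g) (hD : |D| ≤ K)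
    (hK : K ≤ X * g0 / 4) (hA : A ≤ X ^ 2 * g0 / 8) (hτ : τ ≤ X ^ 2 * y * g0 / 8) :
    (g0 ≤ g → A * y + τ - ((X ^ 2 * y + 2 * X + lam * X * y) * g + (X * y + 1) * D)
      ≤ - (g0 / 2) * (X * (X * y + 1))) ∧
    (A * y + τ - ((X ^ 2 * y + 2 * X + lam * X * y) * g + (X * y + 1) * D)
      ≤ g0 * (M + 2) * X ^ 2 - (g0 / 2) * (X * (X * y + 1))) := by
  have hX0 : 0 < X := by linarith
  have h1 : A * y ≤ X ^ 2 * g0 / 8 * y := mul_le_mul_of_nonneg_right hA hy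
  have h2 : -((X * y + 1) * D) ≤ (X * y + 1) * (X * g0 / 4) := by
    have : -D ≤ X * g0 / 4 := (neg_le_abs D).trans (hD.trans hK)
    have := mul_le_mul_of_nonneg_left this (by positivity : 0 ≤ X * y + 1)
    linarith
  have h3 : 0 ≤ lam * X * y * g := by positivity
  constructor
  · intro hgg
    have h4 := mul_le_mul_of_nonneg_left hgg (by positivity : 0 ≤ X ^ 2 * y + 2 * X)
    have h5 : 0 < X * g0 := by positivity
    nlinarith
  · have h4 : 0 ≤ (X ^ 2 * y + 2 * X) * g := by positivity
    have h5 : g0 * X ^ 2 * y ≤ g0 * X ^ 2 * M := mul_le_mul_of_nonneg_left hyM (by positivity)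
    have h6 : g0 * X ≤ g0 * X ^ 2 := mul_le_mul_of_nonneg_left (by nlinarith) hg0.le
    have h7 : 0 < X * g0 := by positivity
    nlinarith

lemma aux_exp_bd {s c d r : ℝ} (hs : 0 < s) (hc : 0 < c) (hcd : c ≤ d) (hr : 0 < r) :
    Real.exp (-s * (d / r)) ≤ r / (s * c) ∧ Real.exp (-s * (d / r)) ≤ 2 * r ^ 2 / (s * c) ^ 2 := by
  have h0 : Real.exp (-s * (d / r)) ≤ Real.exp (-(s * c / r)) := by
    apply Real.exp_le_exp.2
    have : c / r ≤ d / r := div_le_div_of_nonneg_right hcd hr.le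
    have := mul_le_mul_of_nonneg_left this hs.le
    rw [mul_div_assoc]; linarith
  have hz : 0 < s * c / r := by positivity
  have h1 := Real.quadratic_le_exp_of_nonneg hz.le
  have e1 : r / (s * c) = (s * c / r)⁻¹ := by rw [inv_div]
  have e2 : 2 * r ^ 2 / (s * c) ^ 2 = ((s * c / r) ^ 2 / 2)⁻¹ := by
    field_simp
  rw [e1, e2]
  constructor
  · refine h0.trans ?_
    rw [Real.exp_neg]
    apply inv_anti₀ hz
    nlinarith [sq_nonneg (s * c / r)]
  · refine h0.trans ?_
    rw [Real.exp_neg]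
    apply inv_anti₀ (by positivity)
    nlinarith [sq_nonneg (s * c / r)]

lemma aux_int_lin {α : Type*} [MeasurableSpace α] {μ : Measure α} {f g h : α → ℝ}
    (hf : Integrable f μ) (hg : Integrable g μ) (hh : Integrable h μ) (a b l : ℝ) :
    Integrable (fun x => a * f x - b * (l * g x + h x)) μ ∧
    ∫ x, (a * f x - b * (l * g x + h x)) ∂μ
      = a * (∫ x, f x ∂μ) - b * (l * (∫ x, g x ∂μ) + ∫ x, h x ∂μ) := by
  have h1 : Integrable (fun x => l * g x + h x) μ := (hg.const_mul l).add hh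
  refine ⟨(hf.const_mul a).sub (h1.const_mul b), ?_⟩
  rw [integral_sub (hf.const_mul a) (h1.const_mul b), integral_const_mul, integral_const_mul,
    integral_add (hg.const_mul l) hh, integral_const_mul]

theorem carleman_L1_dirichlet
    (N : ℕ) (hN : 1 ≤ N)
    (Ω ω₀ ω : Set (EuclideanSpace ℝ (Fin N)))
    (hΩo : IsOpen Ω) (hΩb : Bornology.IsBounded Ω) (hΩc : IsConnected Ω)
    (hω₀o : IsOpen ω₀) (hω₀ne : ω₀.Nonempty) (hωo : IsOpen ω) (hωne : ω.Nonempty)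
    (hω₀ω : closure ω₀ ⊆ ω) (hωΩ : ω ⊆ Ω)
    (η : EuclideanSpace ℝ (Fin N) → ℝ) (hη : ContDiff ℝ 2 η)
    (hηpos : ∀ x ∈ Ω, 0 < η x) (hηbd : ∀ x ∈ frontier Ω, η x = 0)
    (hηgrad : ∀ x ∈ closure (Ω \ ω₀), 0 < ‖gradient η x‖)
    (M : ℝ) (hM : IsGreatest (η '' closure Ω) M) :
    ∃ C > (0:ℝ), ∃ C₁ > (0:ℝ),
      ∀ T : ℝ, 0 < T →
      ∀ a : ℝ × EuclideanSpace ℝ (Fin N) → ℝ, Measurable a →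
      (∃ B : ℝ, ∀ p ∈ Set.Ioo (0:ℝ) T ×ˢ Ω, |a p| ≤ B) →
      ∀ lam : ℝ, 1 ≤ lam →
      ∀ s : ℝ,
        C * (Real.exp (2 * lam * M) * T + T ^ 2 +
          T ^ 2 * Real.sqrt (eLpNorm a ⊤ (volume.restrict (Set.Ioo (0:ℝ) T ×ˢ Ω))).toReal) ≤ s →
      ∀ q qt : ℝ × EuclideanSpace ℝ (Fin N) → ℝ,
        ContinuousOn q (Set.Icc 0 T ×ˢ closure Ω) →
        (∀ p ∈ Set.Icc 0 T ×ˢ closure Ω, 0 ≤ q p) →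
        (∀ p ∈ Set.Ioo 0 T ×ˢ closure Ω,
          HasDerivAt (fun τ => q (τ, p.2)) (qt p) p.1) →
        ContinuousOn qt (Set.Ioo 0 T ×ˢ closure Ω) →
        (∀ p ∈ Set.Ioo 0 T ×ˢ closure Ω,
          DifferentiableAt ℝ (fun z => q (p.1, z)) p.2) →
        (∀ p ∈ Set.Ioo 0 T ×ˢ closure Ω,
          DifferentiableAt ℝ (fun y => fderiv ℝ (fun z => q (p.1, z)) y) p.2) →
        ContinuousOn (fun p : ℝ × EuclideanSpace ℝ (Fin N) =>
          fderiv ℝ (fun z => q (p.1, z)) p.2) (Set.Ioo 0 T ×ˢ closure Ω) →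
        ContinuousOn (fun p : ℝ × EuclideanSpace ℝ (Fin N) =>
          fderiv ℝ (fun y => fderiv ℝ (fun z => q (p.1, z)) y) p.2)
          (Set.Ioo 0 T ×ˢ closure Ω) →
        (∀ t ∈ Set.Ioo (0:ℝ) T, ∀ x ∈ Ω,
          -qt (t, x) - spaceLaplacian (fun z => q (t, z)) x
            + a (t, x) * q (t, x) = 0) →
        (∀ t ∈ Set.Ioo (0:ℝ) T, ∀ x ∈ frontier Ω, q (t, x) = 0) →
        lam * (∫ t in Set.Ioo (0:ℝ) T, ∫ x in Ω,
            Real.exp (-s * ((Real.exp (2 * lam * M) - Real.exp (lam * η x)) / (t * (T - t)))) * (s * (Real.exp (lam * η x) / (t * (T - t))) ^ 2) * η x * q (t, x))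
          + (∫ t in Set.Ioo (0:ℝ) T, ∫ x in Ω,
            Real.exp (-s * ((Real.exp (2 * lam * M) - Real.exp (lam * η x)) / (t * (T - t)))) * (Real.exp (lam * η x) / (t * (T - t))) * q (t, x))
          ≤ C₁ * lam * ∫ t in Set.Ioo (0:ℝ) T, ∫ x in ω,
            Real.exp (-s * ((Real.exp (2 * lam * M) - Real.exp (lam * η x)) / (t * (T - t)))) * (s * (Real.exp (lam * η x) / (t * (T - t))) ^ 2) * q (t, x) := by
  classical
  have hηc : Continuous η := hη.continuous
  have hη2 : Differentiable ℝ (fderiv ℝ η) :=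
    (hη.fderiv_right (m := 1) (by norm_num)).differentiable (by norm_num)
  have hK0 : IsCompact (closure Ω) := hΩb.isCompact_closure
  have hηM : ∀ x ∈ closure Ω, η x ≤ M := fun x hx => hM.2 ⟨x, hx, rfl⟩
  have hMpos : 0 < M := by
    obtain ⟨x, hx⟩ := hΩc.nonempty
    exact (hηpos x hx).trans_le (hηM x (subset_closure hx))
  have hηnn : ∀ x ∈ closure Ω, 0 ≤ η x := by
    intro x hx
    by_cases hxΩ : x ∈ Ω
    · exact (hηpos x hxΩ).le
    · rw [hηbd x]
      rw [hΩo.frontier_eq]; exact ⟨hx, hxΩ⟩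
  -- second derivative of C² functions
  have hC2 : ∀ {f : EuclideanSpace ℝ (Fin N) → ℝ}, ContDiff ℝ 2 f →
      (∀ x, DifferentiableAt ℝ f x) ∧ (∀ x, DifferentiableAt ℝ (fun y => fderiv ℝ f y) x) ∧
      Continuous (fun x => fderiv ℝ (fun y => fderiv ℝ f y) x) := by
    intro f hf
    have h1 : ContDiff ℝ 1 (fderiv ℝ f) := hf.fderiv_right (by norm_num)
    exact ⟨hf.differentiable (by norm_num), h1.differentiable (by norm_num),
      h1.continuous_fderiv (by norm_num)⟩
  obtain ⟨K, hK⟩ := hK0.exists_bound_of_continuousOn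
    (aux_lap_cont (u := η) (fun x _ => (hC2 hη).2.1 x) (hC2 hη).2.2.continuousOn)
  have hgradc : Continuous (fun x => gradient η x) := by
    unfold gradient
    exact (InnerProductSpace.toDual ℝ _).symm.continuous.comp (hη.continuous_fderiv (by norm_num))
  obtain ⟨g0, hg0, hg⟩ := IsCompact.exists_forall_le' (s := closure (Ω \ ω₀))
    (f := fun x => ‖gradient η x‖ ^ 2) (a := 0)
    ((hΩb.subset sdiff_subset).isCompact_closure) (by fun_prop)
    (fun x hx => by have := hηgrad x hx; positivity)
  have hKnn : 0 ≤ K := by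
    obtain ⟨x, hx⟩ := hΩc.nonempty
    exact (norm_nonneg _).trans (hK x (subset_closure hx))
  set C : ℝ := 1 + (K + 8) / g0 with hCdef
  have hCg : C * g0 = g0 + K + 8 := by rw [hCdef]; field_simp; ring
  have hC1 : 1 ≤ C := by rw [hCdef]; have : 0 ≤ (K + 8) / g0 := by positivity
                         linarith
  refine ⟨C, by linarith, 2 * (M + 2), by linarith, ?_⟩
  intro T hT a ha hab lam hlam s hs q qt hqc hqnn hqt hqtc hq1 hq2 hq1c hq2c heq hqbd
  set A : ℝ := (eLpNorm a ⊤ (volume.restrict (Set.Ioo (0:ℝ) T ×ˢ Ω))).toReal with hAdef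
  have hA0 : 0 ≤ A := ENNReal.toReal_nonneg
  set E : ℝ := Real.exp (2 * lam * M) with hEdef
  have hlam0 : 0 < lam := by linarith
  have hEe : ∀ x ∈ closure Ω, Real.exp (lam * η x) ≤ Real.exp (lam * M) := fun x hx =>
    Real.exp_le_exp.2 (mul_le_mul_of_nonneg_left (hηM x hx) hlam0.le)
  have hEM : Real.exp (lam * M) < E := Real.exp_lt_exp.2 (by nlinarith [mul_pos hlam0 hMpos])
  have hU : IsOpen (Ioo (0:ℝ) T ×ˢ Ω) := isOpen_Ioo.prod hΩo
  have hsub : Ioo (0:ℝ) T ×ˢ Ω ⊆ Ioo 0 T ×ˢ closure Ω := prod_mono subset_rfl subset_closure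
  have hsub' : Ioo (0:ℝ) T ×ˢ closure Ω ⊆ Icc 0 T ×ˢ closure Ω :=
    prod_mono Ioo_subset_Icc_self subset_rfl
  have hqc' : ContinuousOn q (Ioo 0 T ×ˢ closure Ω) := hqc.mono hsub'
  have hlapc : ContinuousOn (fun p : ℝ × EuclideanSpace ℝ (Fin N) =>
      spaceLaplacian (fun z => q (p.1, z)) p.2) (Ioo 0 T ×ˢ closure Ω) := by
    refine ContinuousOn.congr (f := fun p => ∑ i : Fin N,
      fderiv ℝ (fun y => fderiv ℝ (fun z => q (p.1, z)) y) p.2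
      (EuclideanSpace.single i 1) (EuclideanSpace.single i 1)) ?_ (fun p hp => aux_lap (hq2 p hp))
    exact continuousOn_finsetSum _ fun i _ =>
      (hq2c.clm_apply continuousOn_const).clm_apply continuousOn_const
  -- the potential bound
  have hpot : ∀ p ∈ Ioo (0:ℝ) T ×ˢ Ω,
      qt p + spaceLaplacian (fun z => q (p.1, z)) p.2 ≤ A * q p := by
    refine aux_ae_le hU ((hqtc.add hlapc).mono hsub) ((continuousOn_const.mul hqc').mono hsub) ?_
    have hfin : eLpNorm a ⊤ (volume.restrict (Set.Ioo (0:ℝ) T ×ˢ Ω)) ≠ ⊤ := by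
      obtain ⟨B, hB⟩ := hab
      rw [eLpNorm_exponent_top]
      refine (eLpNormEssSup_lt_top_of_ae_bound (C := B) ?_).ne
      filter_upwards [ae_restrict_mem hU.measurableSet] with p hp
      exact hB p hp
    have hle : ∀ᵐ p ∂(volume.restrict (Set.Ioo (0:ℝ) T ×ˢ Ω)), |a p| ≤ A := by
      have := ae_le_eLpNormEssSup (f := a) (μ := volume.restrict (Set.Ioo (0:ℝ) T ×ˢ Ω))
      filter_upwards [this] with p hp
      rw [← eLpNorm_exponent_top] at hp
      have := ENNReal.toReal_mono hfin hp
      simpa [hAdef] using this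
    filter_upwards [hle, ae_restrict_mem hU.measurableSet] with p hp hpU
    have h1 := heq p.1 hpU.1 p.2 hpU.2
    have h2 : a p * q p ≤ A * q p :=
      mul_le_mul_of_nonneg_right ((le_abs_self _).trans hp) (hqnn p (hsub' (hsub hpU)))
    have h3 : qt p + spaceLaplacian (fun z => q (p.1, z)) p.2 = a p * q p := by
      have : qt (p.1, p.2) = qt p := rfl
      linarith
    rw [h3]; exact h2
  -- bounds
  obtain ⟨Bq, hBq⟩ := (isCompact_Icc.prod hK0).exists_bound_of_continuousOn hqc
  have hBq0 : 0 ≤ Bq := by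
    obtain ⟨x, hx⟩ := hΩc.nonempty
    exact (norm_nonneg _).trans (hBq (0, x) ⟨⟨le_rfl, hT.le⟩, subset_closure hx⟩)
  have hpar := fun (p : ℝ × EuclideanSpace ℝ (Fin N)) (hp : p ∈ Ioo (0:ℝ) T ×ˢ closure Ω) =>
    aux_param (y := η p.2) (K := K) hg0 hC1 (by linarith) (by linarith) hT hA0 hs hlam (hηnn p.2 hp.2)
      ((hEe p.2 hp.2).trans hEM.le) hp.1
  have hs0 : 0 < s := by
    obtain ⟨x, hx⟩ := hΩc.nonempty
    exact (hpar (T/2, x) ⟨⟨by simp; linarith, by simp; linarith⟩, subset_closure hx⟩).1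
  have hrpos : ∀ t ∈ Ioo (0:ℝ) T, 0 < t * (T - t) := fun t ht => mul_pos ht.1 (sub_pos.2 ht.2)
  set W : ℝ × EuclideanSpace ℝ (Fin N) → ℝ := fun p =>
    Real.exp (-s * ((E - Real.exp (lam * η p.2)) / (p.1 * (T - p.1)))) with hW
  set f3 : ℝ × EuclideanSpace ℝ (Fin N) → ℝ := fun p =>
    W p * (s * (Real.exp (lam * η p.2) / (p.1 * (T - p.1))) ^ 2) * q p with hf3
  set f2 : ℝ × EuclideanSpace ℝ (Fin N) → ℝ := fun p =>
    W p * (Real.exp (lam * η p.2) / (p.1 * (T - p.1))) * q p with hf2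
  set f1 : ℝ × EuclideanSpace ℝ (Fin N) → ℝ := fun p =>
    W p * (s * (Real.exp (lam * η p.2) / (p.1 * (T - p.1))) ^ 2) * η p.2 * q p with hf1
  have hrne : ∀ p ∈ Ioo (0:ℝ) T ×ˢ closure Ω, p.1 * (T - p.1) ≠ 0 :=
    fun p hp => (hrpos p.1 hp.1).ne'
  have hrc : ContinuousOn (fun p : ℝ × EuclideanSpace ℝ (Fin N) => p.1 * (T - p.1))
    (Ioo 0 T ×ˢ closure Ω) := by fun_prop
  have hec : ContinuousOn (fun p : ℝ × EuclideanSpace ℝ (Fin N) => Real.exp (lam * η p.2))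
    (Ioo 0 T ×ˢ closure Ω) := by fun_prop
  have hηc2 : ContinuousOn (fun p : ℝ × EuclideanSpace ℝ (Fin N) => η p.2)
    (Ioo 0 T ×ˢ closure Ω) := by fun_prop
  have hWc : ContinuousOn W (Ioo 0 T ×ˢ closure Ω) :=
    (continuousOn_const.mul ((continuousOn_const.sub hec).div hrc hrne)).rexp
  have hξc := hec.div hrc hrne
  have hf3c : ContinuousOn f3 (Ioo 0 T ×ˢ closure Ω) :=
    (hWc.mul (continuousOn_const.mul (hξc.pow 2))).mul hqc'
  have hf2c : ContinuousOn f2 (Ioo 0 T ×ˢ closure Ω) := (hWc.mul hξc).mul hqc'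
  have hf1c : ContinuousOn f1 (Ioo 0 T ×ˢ closure Ω) :=
    ((hWc.mul (continuousOn_const.mul (hξc.pow 2))).mul hηc2).mul hqc'
  have slice : ∀ {F : ℝ × EuclideanSpace ℝ (Fin N) → ℝ}, ContinuousOn F (Ioo 0 T ×ˢ closure Ω) →
      ∀ τ ∈ Ioo 0 T, ContinuousOn (fun x => F (τ, x)) (closure Ω) := by
    intro F hF τ hτ
    exact hF.comp (by fun_prop) (fun x hx => ⟨hτ, hx⟩)
  set c : ℝ := E - Real.exp (lam * M) with hc
  have hc0 : 0 < c := sub_pos.2 hEM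
  have hWb := fun (p : ℝ × EuclideanSpace ℝ (Fin N)) (hp : p ∈ Ioo (0:ℝ) T ×ˢ closure Ω) =>
    aux_exp_bd (d := E - Real.exp (lam * η p.2)) hs0 hc0 (by have := hEe p.2 hp.2; linarith)
      (hrpos p.1 hp.1)
  have hE0 : 0 < E := Real.exp_pos _
  have hf2b : ∀ p ∈ Ioo (0:ℝ) T ×ˢ closure Ω, |f2 p| ≤ (1 / (s * c)) * E * Bq := by
    intro p hp
    have h1 := (hWb p hp).1
    have h2 := hBq p (hsub' hp)
    have hr := hrpos p.1 hp.1
    have h3 : Real.exp (lam * η p.2) ≤ E := (hEe p.2 hp.2).trans hEM.le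
    simp only [hf2, abs_mul]
    rw [abs_of_pos (Real.exp_pos _ : 0 < W p), abs_of_pos (by positivity)]
    have h4 : W p * (Real.exp (lam * η p.2) / (p.1 * (T - p.1))) ≤
        (p.1 * (T - p.1)) / (s * c) * (E / (p.1 * (T - p.1))) := by
      gcongr
    have h5 : (p.1 * (T - p.1)) / (s * c) * (E / (p.1 * (T - p.1))) = (1 / (s * c)) * E := by
      generalize p.1 * (T - p.1) = r at hr
      have := hr.ne'
      field_simp
    rw [h5] at h4
    exact mul_le_mul h4 h2 (abs_nonneg _) (by positivity)
  have hf3b : ∀ p ∈ Ioo (0:ℝ) T ×ˢ closure Ω, |f3 p| ≤ (2 / (s * c) ^ 2 * s * E ^ 2) * Bq := by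
    intro p hp
    have h1 := (hWb p hp).2
    have h2 := hBq p (hsub' hp)
    have hr := hrpos p.1 hp.1
    have h3 : Real.exp (lam * η p.2) ≤ E := (hEe p.2 hp.2).trans hEM.le
    simp only [hf3]
    rw [abs_mul, abs_of_pos (mul_pos (Real.exp_pos _ : 0 < W p) (by positivity))]
    have h4 : W p * (s * (Real.exp (lam * η p.2) / (p.1 * (T - p.1))) ^ 2) ≤
        2 * (p.1 * (T - p.1)) ^ 2 / (s * c) ^ 2 * (s * (E / (p.1 * (T - p.1))) ^ 2) := by
      gcongr
    have h5 : 2 * (p.1 * (T - p.1)) ^ 2 / (s * c) ^ 2 * (s * (E / (p.1 * (T - p.1))) ^ 2)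
        = 2 / (s * c) ^ 2 * s * E ^ 2 := by
      generalize p.1 * (T - p.1) = r at hr
      have := hr.ne'
      field_simp
    rw [h5] at h4
    exact mul_le_mul h4 h2 (abs_nonneg _) (by positivity)
  have hf13 : ∀ p, f1 p = f3 p * η p.2 := fun p => by simp only [hf1, hf3]; ring
  have hf1b : ∀ p ∈ Ioo (0:ℝ) T ×ˢ closure Ω, |f1 p| ≤ (2 / (s * c) ^ 2 * s * E ^ 2) * Bq * M := by
    intro p hp
    rw [hf13, abs_mul]
    refine mul_le_mul (hf3b p hp) ?_ (abs_nonneg _) (by positivity)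
    rw [abs_of_nonneg (hηnn p.2 hp.2)]; exact hηM p.2 hp.2
  have hI1 := aux_int_prod hΩo hΩb (hf1c.mono hsub) (fun p hp => hf1b p (hsub hp))
  have hI2 := aux_int_prod hΩo hΩb (hf2c.mono hsub) (fun p hp => hf2b p (hsub hp))
  have hsubω : Ioo (0:ℝ) T ×ˢ ω ⊆ Ioo 0 T ×ˢ closure Ω :=
    prod_mono subset_rfl (hωΩ.trans subset_closure)
  have hI3 := aux_int_prod hωo (hΩb.subset hωΩ) (hf3c.mono hsubω) (fun p hp => hf3b p (hsubω hp))
  -- the test function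
  set v : ℝ × EuclideanSpace ℝ (Fin N) → ℝ := fun p => W p * η p.2 with hv
  set vt : ℝ × EuclideanSpace ℝ (Fin N) → ℝ := fun p => W p * (η p.2 *
    (s * (E - Real.exp (lam * η p.2)) * (T - 2 * p.1) / (p.1 * (T - p.1)) ^ 2)) with hvt
  have hvc : ContinuousOn v (Ioo 0 T ×ˢ closure Ω) := hWc.mul hηc2
  have hvtc : ContinuousOn vt (Ioo 0 T ×ˢ closure Ω) := by
    refine hWc.mul (hηc2.mul (ContinuousOn.div ?_ (hrc.pow 2) (fun p hp => pow_ne_zero 2 (hrne p hp))))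
    fun_prop
  have hvd : ∀ p ∈ Ioo 0 T ×ˢ closure Ω, HasDerivAt (fun τ => v (τ, p.2)) (vt p) p.1 :=
    fun p hp => aux_Pt s T (E - Real.exp (lam * η p.2)) (η p.2) p.1 hp.1
  have hJd : ∀ t ∈ Ioo (0:ℝ) T, HasDerivAt (fun τ => ∫ x in Ω, q (τ, x) * v (τ, x))
      (∫ x in Ω, (qt (t, x) * v (t, x) + q (t, x) * vt (t, x))) t := fun t ht =>
    aux_deriv_int hΩo hΩb (Q := fun p => q p * v p) (Q' := fun p => qt p * v p + q p * vt p)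
      (hqc'.mul hvc) ((hqtc.mul hvc).add (hqc'.mul hvtc))
      (fun p hp => (hqt p hp).mul (hvd p hp)) ht
  have hJle : ∀ t ∈ Ioo (0:ℝ) T, (∫ x in Ω, (qt (t, x) * v (t, x) + q (t, x) * vt (t, x))) ≤
      g0 * (M + 2) * s * lam ^ 2 * (∫ x in ω, f3 (t, x))
        - g0 / 2 * s * lam * (lam * (∫ x in Ω, f1 (t, x)) + ∫ x in Ω, f2 (t, x)) := by
    intro t ht
    have hvC2 : ContDiff ℝ 2 (fun x => v (t, x)) := by
      simp only [hv, hW]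
      fun_prop
    have hgr := aux_green hΩo hΩb (u := fun x => q (t, x)) (v := fun x => v (t, x))
      (fun x hx => hq1 (t, x) ⟨ht, hx⟩) (fun x hx => hq2 (t, x) ⟨ht, hx⟩)
      (hq2c.comp (f := fun x => (t, x)) (by fun_prop) (fun x hx => ⟨ht, hx⟩)) (hqbd t ht)
      (fun x _ => (hC2 hvC2).1 x) (fun x _ => (hC2 hvC2).2.1 x) (hC2 hvC2).2.2.continuousOn
      (fun x hx => by simp [hv, hηbd x hx])
    have hvlapc := aux_lap_cont (Ω := Ω) (u := fun x => v (t, x)) (fun x _ => (hC2 hvC2).2.1 x)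
      (hC2 hvC2).2.2.continuousOn
    have i0 : IntegrableOn (fun x => qt (t, x) * v (t, x) + q (t, x) * vt (t, x)) Ω :=
      aux_integrable hΩb (slice ((hqtc.mul hvc).add (hqc'.mul hvtc)) t ht)
    have i1 : IntegrableOn (fun x => q (t, x) * spaceLaplacian (fun x => v (t, x)) x
        - v (t, x) * spaceLaplacian (fun x => q (t, x)) x) Ω :=
      aux_integrable hΩb (((slice hqc' t ht).mul hvlapc).sub ((slice hvc t ht).mul (slice hlapc t ht)))
    have i2 : IntegrableOn (fun x => f1 (t, x)) Ω := aux_integrable hΩb (slice hf1c t ht)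
    have i3 : IntegrableOn (fun x => f2 (t, x)) Ω := aux_integrable hΩb (slice hf2c t ht)
    have i4 : IntegrableOn (fun x => ω.indicator (fun x => f3 (t, x)) x) Ω :=
      (aux_integrable hΩb (slice hf3c t ht)).indicator hωo.measurableSet
    have e3 : ∫ x in ω, f3 (t, x) = ∫ x in Ω, ω.indicator (fun x => f3 (t, x)) x := by
      rw [setIntegral_indicator hωo.measurableSet, inter_eq_self_of_subset_right hωΩ]
    have e0 : (∫ x in Ω, (qt (t, x) * v (t, x) + q (t, x) * vt (t, x))) =
        ∫ x in Ω, ((qt (t, x) * v (t, x) + q (t, x) * vt (t, x)) -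
          (q (t, x) * spaceLaplacian (fun x => v (t, x)) x
        - v (t, x) * spaceLaplacian (fun x => q (t, x)) x)) := by
      rw [integral_sub i0 i1, hgr, sub_zero]
    have e4 : g0 * (M + 2) * s * lam ^ 2 * (∫ x in Ω, ω.indicator (fun x => f3 (t, x)) x)
        - g0 / 2 * s * lam * (lam * (∫ x in Ω, f1 (t, x)) + ∫ x in Ω, f2 (t, x)) =
        ∫ x in Ω, (g0 * (M + 2) * s * lam ^ 2 * (ω.indicator (fun x => f3 (t, x)) x)
        - g0 / 2 * s * lam * (lam * f1 (t, x) + f2 (t, x))) :=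
      (aux_int_lin i4 i2 i3 _ _ _).2.symm
    rw [e0, e3, e4]
    refine setIntegral_mono_on (i0.sub i1)
      (aux_int_lin i4 i2 i3 _ _ _).1 hΩo.measurableSet ?_
    intro x hx
    have hx' := subset_closure hx
    have hp : (t, x) ∈ Ioo (0:ℝ) T ×ˢ closure Ω := ⟨ht, hx'⟩
    have hq0 := hqnn (t, x) (hsub' hp)
    have hW0 : 0 < W (t, x) := Real.exp_pos _
    have hlapv : spaceLaplacian (fun x => v (t, x)) x = _ := aux_lap_comp
      (fun y => aux_P1 s (t * (T - t)) lam E y) (fun y => aux_P2 s (t * (T - t)) lam E y) hη x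
    obtain ⟨-, hp1, hp2, hp3, hp4⟩ := hpar (t, x) hp
    dsimp only at hp1 hp2 hp3 hp4
    obtain ⟨hn1, hn2⟩ := aux_num hg0 hp1 hlam (hηnn x hx') (hηM x hx') (sq_nonneg ‖gradient η x‖)
      (hK x hx') hp2 hp3 hp4
    have hpt := mul_le_mul_of_nonneg_right (hpot (t, x) ⟨ht, hx⟩)
      (mul_nonneg hW0.le (hηnn x hx'))
    dsimp only at hpt
    have hWe : Real.exp (-s * ((E - Real.exp (lam * η x)) / (t * (T - t)))) = W (t, x) := rfl
    rw [hWe] at hlapv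
    rw [hlapv]
    have hqW : 0 ≤ q (t, x) * W (t, x) := mul_nonneg hq0 hW0.le
    have hr := (hrpos t ht).ne'
    have hf3X : s * lam ^ 2 * f3 (t, x) = q (t, x) * W (t, x) *
        (s / (t * (T - t)) * lam * Real.exp (lam * η x)) ^ 2 := by
      simp only [hf3]
      generalize t * (T - t) = r at hr
      field_simp
    have hf12X : s * lam * (lam * f1 (t, x) + f2 (t, x)) = q (t, x) * W (t, x) *
        ((s / (t * (T - t)) * lam * Real.exp (lam * η x)) *
        ((s / (t * (T - t)) * lam * Real.exp (lam * η x)) * η x + 1)) := by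
      simp only [hf1, hf2]
      generalize t * (T - t) = r at hr
      field_simp
    by_cases hxω : x ∈ ω
    · rw [indicator_of_mem hxω]
      have := mul_le_mul_of_nonneg_left hn2 hqW
      simp only [hv, hvt] at *
      linear_combination this + hpt + g0 * (M + 2) * hf3X - g0 / 2 * hf12X
    · rw [indicator_of_notMem hxω]
      have := mul_le_mul_of_nonneg_left (hn1 (hg x (subset_closure
        ⟨hx, fun h => hxω (hω₀ω (subset_closure h))⟩))) hqW
      simp only [hv, hvt] at *
      linear_combination this + hpt - g0 / 2 * hf12X
  -- boundary values in time
  set J : ℝ → ℝ := fun t => if t ∈ Ioo (0:ℝ) T then ∫ x in Ω, q (t, x) * v (t, x) else 0 with hJ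
  obtain ⟨BJ, hBJ⟩ : ∃ BJ, ∀ t ∈ Icc (0:ℝ) T, |J t| ≤ BJ * (t * (T - t)) := by
    refine ⟨Bq * (M / (s * c)) * volume.real Ω, fun t ht => ?_⟩
    by_cases htI : t ∈ Ioo (0:ℝ) T
    · simp only [hJ, if_pos htI]
      have hr := hrpos t htI
      have := norm_setIntegral_le_of_norm_le_const (μ := volume) (s := Ω)
        (f := fun x => q (t, x) * v (t, x))
        (C := Bq * ((t * (T - t)) / (s * c) * M)) hΩb.measure_lt_top ?_
      · rw [Real.norm_eq_abs] at this
        refine this.trans (le_of_eq ?_)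
        ring
      · intro x hx
        have hp : (t, x) ∈ Ioo (0:ℝ) T ×ˢ closure Ω := ⟨htI, subset_closure hx⟩
        rw [norm_mul]
        refine mul_le_mul (hBq _ (hsub' hp)) ?_ (norm_nonneg _) hBq0
        simp only [hv]
        rw [Real.norm_eq_abs, abs_mul, abs_of_pos (Real.exp_pos _ : 0 < W (t, x)),
          abs_of_nonneg (hηnn x hp.2)]
        exact mul_le_mul (hWb _ hp).1 (hηM x hp.2) (hηnn x hp.2) (by positivity)
    · simp only [hJ, if_neg htI, abs_zero]
      have : 0 ≤ t * (T - t) := mul_nonneg ht.1 (sub_nonneg.2 ht.2)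
      positivity
  have hJd' : ∀ t ∈ Ioo (0:ℝ) T, HasDerivAt J
      (∫ x in Ω, (qt (t, x) * v (t, x) + q (t, x) * vt (t, x))) t := by
    intro t ht
    refine (hJd t ht).congr_of_eventuallyEq ?_
    filter_upwards [isOpen_Ioo.mem_nhds ht] with τ hτ
    simp only [hJ, if_pos hτ]
  have hJ0 : J 0 = 0 := by simp [hJ]
  have hJT : J T = 0 := by simp [hJ]
  have hJc : ContinuousOn J (Icc 0 T) := by
    have hend : ∀ t0 : ℝ, t0 * (T - t0) = 0 → J t0 = 0 → ContinuousWithinAt J (Icc 0 T) t0 := by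
      intro t0 h1 h2
      unfold ContinuousWithinAt
      rw [h2]
      refine squeeze_zero_norm' (a := fun t => BJ * (t * (T - t))) ?_ ?_
      · filter_upwards [self_mem_nhdsWithin] with t ht using hBJ t ht
      · have : ContinuousWithinAt (fun t => BJ * (t * (T - t))) (Icc 0 T) t0 := by fun_prop
        unfold ContinuousWithinAt at this
        simpa [h1] using this
    intro t ht
    rcases eq_or_lt_of_le ht.1 with h | h
    · subst h; exact hend 0 (by simp) hJ0
    rcases eq_or_lt_of_le ht.2 with h' | h'
    · subst h'; exact hend t (by simp) hJT
    exact (hJd' t ⟨h, h'⟩).continuousAt.continuousWithinAt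
  have hφint : IntegrableOn (fun t => g0 * (M + 2) * s * lam ^ 2 * (∫ x in ω, f3 (t, x))
        - g0 / 2 * s * lam * (lam * (∫ x in Ω, f1 (t, x)) + ∫ x in Ω, f2 (t, x))) (Ioo 0 T) :=
    (aux_int_lin hI3 hI1 hI2 _ _ _).1
  have hfin := intervalIntegral.sub_le_integral_of_hasDeriv_right_of_le hT.le hJc
    (fun t ht => (hJd' t ht).hasDerivWithinAt) (by rwa [integrableOn_Icc_iff_integrableOn_Ioo]) hJle
  rw [hJ0, hJT, intervalIntegral.integral_of_le hT.le, integral_Ioc_eq_integral_Ioo,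
    (aux_int_lin hI3 hI1 hI2 _ _ _).2] at hfin
  have hpos : 0 < g0 / 2 * s * lam := by positivity
  have hgoal : lam * (∫ t in Ioo (0:ℝ) T, ∫ x in Ω, f1 (t, x)) + (∫ t in Ioo (0:ℝ) T, ∫ x in Ω, f2 (t, x))
      ≤ 2 * (M + 2) * lam * ∫ t in Ioo (0:ℝ) T, ∫ x in ω, f3 (t, x) := by
    refine le_of_mul_le_mul_left ?_ hpos
    linear_combination hfin
  exact hgoal
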